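/- Let a : ℕ → Ω be a k-automatic sequence produced by an idempotent k-automaton 𝒜 = (S, Σ_k, δ, s₀, Ω, τ) which ignores the leading 0's and in which every state is accessible, and let x ∈ Ω. Then the constant infinite word x^ω belongs to the subshift X_a generated by a if and only if there exists a strongly connected component C of 𝒜 such that τ(s) = x for all s ∈ C. -/

import Mathlib

open Filter

/-- The upper density of a set of natural numbers:
`limsup_{n → ∞} |A ∩ [0,n)| / n`. -/
noncomputable def upperDensity (A : Set ℕ) : ℝ :=
  limsup (fun n : ℕ => (Nat.card ↥(A ∩ Set.Iio n) : ℝ) / n) atTop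

/-- The base-`k` representation of `n` as a word over `Σ_k = Fin k`, read starting
from the leading digit, with no leading zeros (junk value `[]` if `k ≤ 1`;
the representation of `0` is the empty word). -/
def kRepr (k n : ℕ) : List (Fin k) :=
  if h : 1 < k then
    (Nat.digits k n).reverse.pmap (fun d hd => (⟨d, hd⟩ : Fin k))
      (fun d hd => Nat.digits_lt_base h (List.mem_reverse.mp hd))
  else []

/-- Run a deterministic automaton with transition function `δ` from the state `s`
on the word `w`, reading `w` from the left: the extended transition function `δ*`. -/
def run {S : Type*} {k : ℕ} (δ : S → Fin k → S) (s : S) (w : List (Fin k)) : S :=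
  w.foldl δ s

/-- A sequence `a : ℕ → Ω` is `k`-automatic if it is produced by a deterministic
finite automaton with output, reading the base-`k` representation of the input
starting from the leading digit. -/
def IsAutomatic {Ω : Type*} (k : ℕ) (a : ℕ → Ω) : Prop :=
  ∃ (S : Type) (_ : Fintype S) (δ : S → Fin k → S) (s₀ : S) (τ : S → Ω),
    ∀ n : ℕ, a n = τ (run δ s₀ (kRepr k n))

/-- Two integers are multiplicatively independent if no nontrivial powers of them
coincide (equivalently, they are not both powers of a common integer). -/
def MultIndep (k l : ℕ) : Prop :=
  ∀ i j : ℕ, k ^ i = l ^ j → i = 0 ∧ j = 0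

/-- The finite word `w` occurs in the sequence `a` at position `i`. -/
def OccursAt {Ω : Type*} (a : ℕ → Ω) (w : List Ω) (i : ℕ) : Prop :=
  ∀ (j : ℕ) (h : j < w.length), w.get ⟨j, h⟩ = a (i + j)

/-- The finite word `w` is a factor of the sequence `a`. -/
def IsFactor {Ω : Type*} (a : ℕ → Ω) (w : List Ω) : Prop :=
  ∃ i : ℕ, OccursAt a w i

/-- A sequence is uniformly recurrent if each of its factors occurs in it with
bounded gaps. -/
def UniformlyRecurrent {Ω : Type*} (a : ℕ → Ω) : Prop :=
  ∀ w : List Ω, IsFactor a w →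
    ∃ C : ℕ, ∀ N : ℕ, ∃ i : ℕ, N ≤ i ∧ i ≤ N + C ∧ OccursAt a w i

/-- A strongly connected component of an automaton: a nonempty set of states closed
under all transitions and such that each of its states can be reached from each
other one by some word. -/
def IsSCC {S : Type*} {k : ℕ} (δ : S → Fin k → S) (C : Set S) : Prop :=
  C.Nonempty ∧ (∀ s ∈ C, ∀ u : Fin k, δ s u ∈ C) ∧
    ∀ s ∈ C, ∀ s' ∈ C, ∃ w : List (Fin k), run δ s w = s'

/-!
The integers in `[q * k ^ m, (q + 1) * k ^ m)` with `q ≠ 0` are those whose representation is that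
of `q` followed by a word `v` of length `m`, so `a` restricted to this block records the outputs
along all words of length `m` from one state. Long constant factors contain long such blocks, which
gives, for every `m`, a state from which all words of length `m` have output `x`. One state `s` does
this for infinitely many `m`. After reading one `0` from `s`, further `0`s change nothing, so
every word can be padded in front to one of these lengths: from `δ s 0` all words have output `x`,
and a strongly connected component is reachable from there.
Conversely, a word leading from `s₀` into a component constant on `x`, followed by all words of
length `n`, represents a run of `k ^ n` consecutive positions carrying `x`.
-/

section Words

variable {k : ℕ}

/-- The integer `[w]_k` represented in base `k` by the word `w`, read from the leading digit;
leading zeros are allowed. -/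
def wordValue (w : List (Fin k)) : ℕ :=
  Nat.ofDigits k (w.reverse.map Fin.val)

theorem wordValue_append (w v : List (Fin k)) :
    wordValue (w ++ v) = wordValue w * k ^ v.length + wordValue v := by
  simp [wordValue, Nat.ofDigits_append, add_comm, mul_comm]

theorem wordValue_concat (w : List (Fin k)) (d : Fin k) :
    wordValue (w ++ [d]) = k * wordValue w + d := by
  simp [wordValue, Nat.ofDigits_cons, add_comm]

theorem wordValue_lt_pow_length (hk : 1 < k) (w : List (Fin k)) : wordValue w < k ^ w.length := by
  simpa [wordValue] using
    Nat.ofDigits_lt_base_pow_length (l := w.reverse.map Fin.val) hk (by simp)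

theorem exists_length_eq_wordValue_eq {m j : ℕ} (hj : j < k ^ m) :
    ∃ v : List (Fin k), v.length = m ∧ wordValue v = j := by
  induction m generalizing j with
  | zero => exact ⟨[], rfl, (Nat.lt_one_iff.mp hj).symm⟩
  | succ m ih =>
    have hk : 0 < k := Nat.pos_of_ne_zero (by rintro rfl; simp at hj)
    have hdiv : j / k < k ^ m := Nat.div_lt_of_lt_mul (pow_succ' k m ▸ hj)
    obtain ⟨v, hlen, hv⟩ := ih hdiv
    refine ⟨v ++ [⟨j % k, Nat.mod_lt j hk⟩], by simp [hlen], ?_⟩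
    rw [wordValue_concat, hv, Nat.div_add_mod]

theorem kRepr_zero (k : ℕ) : kRepr k 0 = [] := by
  simp [kRepr]

theorem kRepr_mul_add (hk : 1 < k) {q : ℕ} {d : Fin k} (h : (d : ℕ) ≠ 0 ∨ q ≠ 0) :
    kRepr k (k * q + d) = kRepr k q ++ [d] := by
  have hdigits : Nat.digits k (k * q + d) = (d : ℕ) :: Nat.digits k q := by
    rw [add_comm, Nat.digits_add k hk d q d.isLt h]
  simp [kRepr, hk, hdigits, List.pmap_append]

theorem kRepr_mul_pow_add_wordValue (hk : 1 < k) {q : ℕ} (hq : q ≠ 0) (v : List (Fin k)) :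
    kRepr k (q * k ^ v.length + wordValue v) = kRepr k q ++ v := by
  induction v using List.reverseRecOn with
  | nil => simp [wordValue]
  | append_singleton v d ih =>
    have hne : q * k ^ v.length + wordValue v ≠ 0 := by positivity
    calc kRepr k (q * k ^ (v ++ [d]).length + wordValue (v ++ [d]))
        = kRepr k (k * (q * k ^ v.length + wordValue v) + d) := by
          rw [wordValue_concat, List.length_append, List.length_singleton]
          ring_nf
      _ = kRepr k q ++ (v ++ [d]) := by
          rw [kRepr_mul_add hk (.inr hne), ih, List.append_assoc]

end Words

section Automaton

variable {S : Type*} {k : ℕ} {δ : S → Fin k → S}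

theorem run_append (δ : S → Fin k → S) (s : S) (v w : List (Fin k)) :
    run δ s (v ++ w) = run δ (run δ s v) w :=
  List.foldl_append

theorem run_mem_of_closed {C : Set S} (hC : ∀ s ∈ C, ∀ d, δ s d ∈ C) {s : S} (hs : s ∈ C)
    (w : List (Fin k)) : run δ s w ∈ C :=
  List.foldlRecOn w δ hs fun t ht d _ => hC t ht d

theorem run_replicate_succ_of_idem {e : Fin k} (he : ∀ s, δ (δ s e) e = δ s e) (s : S) (n : ℕ) :
    run δ s (List.replicate (n + 1) e) = δ s e := by
  induction n with
  | zero => rfl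
  | succ n ih =>
    rw [List.replicate_succ', run_append, ih]
    exact he s

theorem run_kRepr_wordValue (hk : 1 < k) {s₀ : S} {z : Fin k} (hz : (z : ℕ) = 0)
    (hzero : δ s₀ z = s₀) (w : List (Fin k)) :
    run δ s₀ (kRepr k (wordValue w)) = run δ s₀ w := by
  induction w using List.reverseRecOn with
  | nil => simp [wordValue, kRepr_zero]
  | append_singleton w d ih =>
    rw [wordValue_concat, run_append δ s₀ w, ← ih]
    by_cases h : (d : ℕ) ≠ 0 ∨ wordValue w ≠ 0
    · rw [kRepr_mul_add hk h, run_append]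
    · obtain ⟨hd, hw⟩ : (d : ℕ) = 0 ∧ wordValue w = 0 := by simpa using h
      obtain rfl : d = z := Fin.ext (hd.trans hz.symm)
      simp [hd, hw, kRepr_zero, run, hzero]

theorem range_run_subset_of_mem {s t : S} (ht : t ∈ Set.range (run δ s)) :
    Set.range (run δ t) ⊆ Set.range (run δ s) := by
  obtain ⟨v, rfl⟩ := ht
  rintro _ ⟨w, rfl⟩
  exact ⟨v ++ w, run_append δ s v w⟩

theorem exists_isSCC_subset_range_run [Finite S] (δ : S → Fin k → S) (s : S) :
    ∃ C, IsSCC δ C ∧ C ⊆ Set.range (run δ s) := by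
  obtain ⟨t, ht, hmin⟩ := (Set.range (run δ s)).toFinite.exists_minimalFor
    (fun t => Set.range (run δ t)) _ (Set.range_nonempty _)
  refine ⟨Set.range (run δ t), ⟨Set.range_nonempty _, ?_, ?_⟩, range_run_subset_of_mem ht⟩
  · intro u hu d
    exact range_run_subset_of_mem hu ⟨[d], rfl⟩
  · intro u hu u' hu'
    exact hmin (range_run_subset_of_mem ht hu) (range_run_subset_of_mem hu) hu'

theorem exists_forall_run_mem_of_idem [Finite S] {e : Fin k} (he : ∀ s, δ (δ s e) e = δ s e)
    {A : Set S} (h : ∀ m, ∃ s, ∀ v : List (Fin k), v.length = m → run δ s v ∈ A) :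
    ∃ s, ∀ v, run δ s v ∈ A := by
  choose state hstate using h
  obtain ⟨s, hs⟩ := Finite.exists_infinite_fiber state
  refine ⟨δ s e, fun v => ?_⟩
  obtain ⟨m, rfl, hm⟩ := (Set.infinite_coe_iff.mp hs).exists_gt v.length
  obtain ⟨n, rfl⟩ := Nat.exists_eq_add_of_lt hm
  have hlen : (List.replicate (n + 1) e ++ v).length = v.length + n + 1 := by
    rw [List.length_append, List.length_replicate]
    omega
  have hpad := hstate _ _ hlen
  rwa [run_append, run_replicate_succ_of_idem he] at hpad

end Automaton

section Factors

variable {S Ω : Type*} {k : ℕ} {δ : S → Fin k → S} {s₀ : S} {τ : S → Ω} {x : Ω}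

theorem isFactor_replicate_iff {a : ℕ → Ω} {n : ℕ} :
    IsFactor a (List.replicate n x) ↔ ∃ i, ∀ j < n, a (i + j) = x := by
  simp [IsFactor, OccursAt, eq_comm]

theorem exists_forall_output_run_eq_of_isFactor_replicate (hk : 1 < k) {m : ℕ}
    (h : IsFactor (fun n => τ (run δ s₀ (kRepr k n))) (List.replicate (2 * k ^ m) x)) :
    ∃ s, ∀ v : List (Fin k), v.length = m → τ (run δ s v) = x := by
  obtain ⟨i, hi⟩ := isFactor_replicate_iff.mp h
  -- `[i, i + 2 * k ^ m)` contains the block `[q * k ^ m, (q + 1) * k ^ m)`.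
  set q := i / k ^ m + 1 with hq
  have hstart : i < q * k ^ m := by
    rw [hq, add_one_mul]
    exact Nat.lt_div_mul_add (by positivity)
  have hend : q * k ^ m ≤ i + k ^ m := by
    rw [hq, add_one_mul]
    gcongr
    exact Nat.div_mul_le_self i _
  refine ⟨run δ s₀ (kRepr k q), ?_⟩
  rintro v rfl
  have hv := wordValue_lt_pow_length hk v
  rw [← run_append, ← kRepr_mul_pow_add_wordValue hk (Nat.succ_ne_zero _)]
  obtain ⟨j, hj⟩ := Nat.exists_eq_add_of_lt (Nat.lt_add_right (wordValue v) hstart)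
  rw [hj]
  exact hi (j + 1) (by omega)

theorem isFactor_replicate_of_closed (hk : 1 < k) {z : Fin k} (hz : (z : ℕ) = 0)
    (hzero : δ s₀ z = s₀) {C : Set S} (hC : ∀ s ∈ C, ∀ d, δ s d ∈ C) (hx : ∀ s ∈ C, τ s = x)
    {w : List (Fin k)} (hw : run δ s₀ w ∈ C) (n : ℕ) :
    IsFactor (fun n => τ (run δ s₀ (kRepr k n))) (List.replicate n x) := by
  refine isFactor_replicate_iff.mpr ⟨wordValue w * k ^ n, fun j hj => hx _ ?_⟩
  obtain ⟨v, rfl, rfl⟩ := exists_length_eq_wordValue_eq (hj.trans (Nat.lt_pow_self hk))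
  rw [← wordValue_append, run_kRepr_wordValue hk hz hzero, run_append]
  exact run_mem_of_closed hC hw v

end Factors

/-- For a sequence `a` produced by an idempotent `k`-automaton which ignores the
leading `0`'s and all of whose states are accessible, the constant word `x^ω`
belongs to the subshift `X_a` generated by `a` (i.e., every constant word
`x^n` is a factor of `a`) if and only if the automaton has a strongly connected
component on which the output map is constantly equal to `x`. -/
theorem const_word_mem_subshift_iff {S Ω : Type} [Fintype S]
    (k : ℕ) (hk : 2 ≤ k)
    (δ : S → Fin k → S) (s₀ : S) (τ : S → Ω)
    (z₀ : Fin k) (hz₀ : (z₀ : ℕ) = 0)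
    (hzero : δ s₀ z₀ = s₀)
    (hidem : ∀ s : S, δ (δ s z₀) z₀ = δ s z₀)
    (hacc : ∀ s : S, ∃ w : List (Fin k), run δ s₀ w = s)
    (a : ℕ → Ω) (ha : ∀ n : ℕ, a n = τ (run δ s₀ (kRepr k n)))
    (x : Ω) :
    (∀ n : ℕ, IsFactor a (List.replicate n x)) ↔
      ∃ C : Set S, IsSCC δ C ∧ ∀ s ∈ C, τ s = x := by
  obtain rfl : a = fun n => τ (run δ s₀ (kRepr k n)) := funext ha
  constructor
  · intro h
    have hblock (m : ℕ) : ∃ s, ∀ v : List (Fin k), v.length = m → run δ s v ∈ τ ⁻¹' {x} :=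
      exists_forall_output_run_eq_of_isFactor_replicate hk (h (2 * k ^ m))
    obtain ⟨s, hs⟩ := exists_forall_run_mem_of_idem hidem hblock
    obtain ⟨C, hC, hreach⟩ := exists_isSCC_subset_range_run δ s
    exact ⟨C, hC, hreach.trans (Set.range_subset_iff.mpr hs)⟩
  · rintro ⟨C, ⟨⟨s, hs⟩, hclosed, -⟩, hx⟩ n
    obtain ⟨w, rfl⟩ := hacc s
    exact isFactor_replicate_of_closed hk hz₀ hzero hclosed hx hs n
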